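/- Exhaustive subsumption is symmetry-preserving: if F* is obtained from a CNF formula F by applying the subsumption rule exhaustively, then Aut_syn(F)_{{Lit(F*)}} = Aut_syn(F) and Aut_syn(F)↓_{Lit(F*)} ⊆ Aut_syn(F*). -/

import Mathlib

/-- A literal over a variable type `V`: a variable or its negation. -/
inductive Lit (V : Type) where
  | pos : V → Lit V
  | neg : V → Lit V
deriving DecidableEq

variable {V : Type} [DecidableEq V]

/-- Negation of a literal (so that double negation is the identity). -/
def Lit.negate : Lit V → Lit V
  | .pos v => .neg v
  | .neg v => .pos v

/-- The underlying variable of a literal. -/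
def Lit.var : Lit V → V
  | .pos v => v
  | .neg v => v

/-- A clause is a finite set of literals. -/
abbrev Clause (V : Type) := Finset (Lit V)

/-- A CNF formula is a finite set of clauses. -/
abbrev CNF (V : Type) := Finset (Clause V)

/-- `Var(F)`: the variables occurring in a formula. -/
def CNF.vars (F : CNF V) : Finset V := Finset.sup F (fun C => Finset.image Lit.var C)

/-- `Lit(F) = Var(F) ∪ {v̄ : v ∈ Var(F)}`. -/
def CNF.lits (F : CNF V) : Finset (Lit V) :=
  Finset.image Lit.pos (CNF.vars F) ∪ Finset.image Lit.neg (CNF.vars F)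

/-- The value of a literal under a complete assignment (given on the variables,
which determines a consistent complete assignment on all literals). -/
def Lit.val (σ : V → Bool) : Lit V → Bool
  | .pos v => σ v
  | .neg v => !(σ v)

/-- `C[σ]`: delete from `C` every literal mapped to `⊥` by `σ`
(i.e. keep `l` with `¬l ∉ σ`). -/
def Clause.reduce (σ : V → Bool) (C : Clause V) : Clause V :=
  Finset.filter (fun l => Lit.val σ (Lit.negate l) = false) C

/-- `F[σ]`: delete every clause containing a literal mapped to `⊤` by `σ`
(for a complete assignment: every clause containing no false literal is kept)
and delete from each remaining clause every literal mapped to `⊥`. -/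
def CNF.reduce (F : CNF V) (σ : V → Bool) : CNF V :=
  Finset.image (Clause.reduce σ) (Finset.filter (fun C => ∀ l ∈ C, Lit.val σ l = false) F)

/-- Apply a map on literals elementwise to clauses and formulas. -/
def CNF.map (φ : Lit V → Lit V) (F : CNF V) : CNF V :=
  Finset.image (fun C => Finset.image φ C) F

/-- `φ` is a syntactic symmetry of `F`: a bijection of `Lit(F)` respecting
negation with `φ(F) = F`. -/
def IsSynSym (F : CNF V) (φ : Lit V → Lit V) : Prop :=
  Set.BijOn φ (CNF.lits F : Set (Lit V)) (CNF.lits F : Set (Lit V)) ∧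
  (∀ l ∈ CNF.lits F, φ (Lit.negate l) = Lit.negate (φ l)) ∧
  CNF.map φ F = F

/-- `φ` is a semantic symmetry of `F`: a bijection of `Lit(F)` respecting
negation with `F[σ] = φ(F)[σ]` for every complete assignment `σ`. -/
def IsSemSym (F : CNF V) (φ : Lit V → Lit V) : Prop :=
  Set.BijOn φ (CNF.lits F : Set (Lit V)) (CNF.lits F : Set (Lit V)) ∧
  (∀ l ∈ CNF.lits F, φ (Lit.negate l) = Lit.negate (φ l)) ∧
  ∀ σ : V → Bool, CNF.reduce F σ = CNF.reduce (CNF.map φ F) σ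

/-- Extend a map defined on the literal set `S` by the identity outside `S`. -/
def extendId (S : Finset (Lit V)) (φ : Lit V → Lit V) : Lit V → Lit V :=
  fun l => if l ∈ S then φ l else l

/-- `F[l ↦ ⊤]`: delete every clause containing `l` and delete `l̄` from every
remaining clause. -/
def CNF.assignTrue (F : CNF V) (l : Lit V) : CNF V :=
  Finset.image (fun C => Finset.erase C (Lit.negate l)) (Finset.filter (fun C => l ∉ C) F)

/-- One application of the subsumption rule: if `C, D ∈ F` with `C ⊊ D`,
replace `F` by `F ∖ {D}`. -/
def SubStep (F F' : CNF V) : Prop :=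
  ∃ C D : Clause V, C ∈ F ∧ D ∈ F ∧ C ⊂ D ∧ F' = F.erase D

/-!
Each application of the subsumption rule preserves the set of `⊆`-minimal clauses, and every clause
of a fully reduced formula is minimal; hence `F*` consists exactly of the minimal clauses of `F`.
A syntactic symmetry of `F` acts on the clauses of `F` as an automorphism of the inclusion order, so
it permutes the minimal ones. As it also commutes with negation, it then permutes `Lit(F*)`.
-/

theorem minimal_mem_erase_iff {α : Type*} [PartialOrder α] [DecidableEq α] {s : Finset α}
    {a b x : α} (ha : a ∈ s) (hab : a < b) :
    Minimal (· ∈ s.erase b) x ↔ Minimal (· ∈ s) x := by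
  refine (minimal_iff_minimal_of_imp_of_forall (fun _ => Finset.mem_of_mem_erase) ?_).symm
  intro y hy
  by_cases hyb : y = b
  · exact ⟨a, hyb ▸ hab.le, Finset.mem_erase_of_ne_of_mem hab.ne ha⟩
  · exact ⟨y, le_rfl, Finset.mem_erase_of_ne_of_mem hyb hy⟩

theorem SubStep.minimal_mem_iff {F G : CNF V} {C : Clause V} (h : SubStep F G) :
    Minimal (· ∈ G) C ↔ Minimal (· ∈ F) C := by
  obtain ⟨A, B, hA, -, hAB, rfl⟩ := h
  exact minimal_mem_erase_iff hA hAB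

theorem minimal_mem_iff_of_reflTransGen_subStep {F G : CNF V} {C : Clause V}
    (h : Relation.ReflTransGen SubStep F G) : Minimal (· ∈ G) C ↔ Minimal (· ∈ F) C := by
  induction h with
  | refl => rfl
  | tail _ hstep ih => exact hstep.minimal_mem_iff.trans ih

theorem coe_eq_setOfPred_minimal_of_exhaustive_subsumption {F Fs : CNF V}
    (hsteps : Relation.ReflTransGen SubStep F Fs)
    (hdone : ¬ ∃ C D : Clause V, C ∈ Fs ∧ D ∈ Fs ∧ C ⊂ D) :
    (Fs : Set (Clause V)) = {C | Minimal (· ∈ F) C} := by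
  ext C
  rw [Set.mem_ofPred_eq, ← minimal_mem_iff_of_reflTransGen_subStep hsteps, minimal_iff_forall_lt]
  exact ⟨fun hC => ⟨hC, fun D hDC hD => hdone ⟨D, C, hD, hC, hDC⟩⟩, And.left⟩

theorem Lit.var_eq_var_iff {W : Type} {l m : Lit W} : l.var = m.var ↔ l = m ∨ l.negate = m := by
  cases l <;> cases m <;> simp [Lit.var, Lit.negate]

namespace CNF

theorem mem_lits {F : CNF V} {l : Lit V} : l ∈ F.lits ↔ l.var ∈ F.vars := by
  cases l <;> simp [lits, Lit.var]

theorem lits_eq_biUnion (F : CNF V) : F.lits = F.biUnion fun C => C ∪ C.image Lit.negate := by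
  ext l
  calc l ∈ F.lits
      ↔ ∃ C ∈ F, ∃ m ∈ C, m.var = l.var := by
        simp only [mem_lits, vars, Finset.mem_sup, Finset.mem_image]
    _ ↔ ∃ C ∈ F, ∃ m ∈ C, m = l ∨ m.negate = l := by simp only [Lit.var_eq_var_iff]
    _ ↔ l ∈ F.biUnion fun C => C ∪ C.image Lit.negate := by
        simp only [Finset.mem_biUnion, Finset.mem_union, Finset.mem_image, and_or_left, exists_or,
          exists_eq_right]

theorem subset_lits {F : CNF V} {C : Clause V} (hC : C ∈ F) : C ⊆ F.lits := by
  rw [lits_eq_biUnion]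
  exact Finset.subset_union_left.trans
    (Finset.subset_biUnion_of_mem (fun C => C ∪ C.image Lit.negate) hC)

theorem lits_mono {F G : CNF V} (h : G ⊆ F) : G.lits ⊆ F.lits := by
  simpa only [lits_eq_biUnion] using Finset.biUnion_subset_biUnion_of_subset_left _ h

theorem lits_map {F : CNF V} {φ : Lit V → Lit V}
    (hneg : ∀ l ∈ F.lits, φ l.negate = (φ l).negate) : (F.map φ).lits = F.lits.image φ := by
  rw [lits_eq_biUnion, lits_eq_biUnion, map, Finset.image_biUnion, Finset.biUnion_image]
  refine Finset.biUnion_congr rfl fun C hC => ?_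
  rw [Finset.image_union, Finset.image_image, Finset.image_image]
  congr 1
  exact Finset.image_congr fun l hl => (hneg l (subset_lits hC hl)).symm

end CNF

namespace IsSynSym

variable {F G : CNF V} {φ : Lit V → Lit V}

theorem image_subset_image_iff (hφ : IsSynSym F φ) {C D : Clause V} (hC : C ∈ F) (hD : D ∈ F) :
    C.image φ ⊆ D.image φ ↔ C ⊆ D :=
  Finset.image_subset_image_iff_of_injOn hφ.1.injOn (CNF.subset_lits hC) (CNF.subset_lits hD)

theorem map_eq_of_coe_eq_setOfPred_minimal (hφ : IsSynSym F φ)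
    (hG : (G : Set (Clause V)) = {C | Minimal (· ∈ F) C}) : G.map φ = G := by
  have himage : Finset.image φ '' (F : Set (Clause V)) = F := by
    exact_mod_cast hφ.2.2
  apply Finset.coe_injective
  calc ((G.map φ : CNF V) : Set (Clause V))
      = Finset.image φ '' {C | Minimal (· ∈ (F : Set (Clause V))) C} := by
        rw [CNF.map, Finset.coe_image, hG]; rfl
    _ = {C | Minimal (· ∈ Finset.image φ '' (F : Set (Clause V))) C} :=
        image_monotone_setOfPred_minimal_mem fun _ _ => hφ.image_subset_image_iff
    _ = G := by rw [himage, hG]; rfl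

theorem of_subset_of_map_eq (hφ : IsSynSym F φ) (hGF : G ⊆ F) (hmap : G.map φ = G) :
    IsSynSym G φ := by
  have hlits : G.lits ⊆ F.lits := CNF.lits_mono hGF
  have hneg : ∀ l ∈ G.lits, φ l.negate = (φ l).negate := fun l hl => hφ.2.1 l (hlits hl)
  have himage : φ '' G.lits = G.lits := by
    rw [← Finset.coe_image, ← CNF.lits_map hneg, hmap]
  have hinj : Set.InjOn φ G.lits := hφ.1.injOn.mono (Finset.coe_subset.mpr hlits)
  have hbij : Set.BijOn φ G.lits G.lits := by
    simpa only [himage] using hinj.bijOn_image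
  exact ⟨hbij, hneg, hmap⟩

theorem of_coe_eq_setOfPred_minimal (hφ : IsSynSym F φ)
    (hG : (G : Set (Clause V)) = {C | Minimal (· ∈ F) C}) : IsSynSym G φ := by
  have hGF : G ⊆ F := Finset.coe_subset.mp (hG ▸ setOfPred_minimal_subset (F : Set (Clause V)))
  exact hφ.of_subset_of_map_eq hGF (hφ.map_eq_of_coe_eq_setOfPred_minimal hG)

end IsSynSym

/-- Exhaustive subsumption is symmetry-preserving: if `F*` is
obtained from `F` by exhaustively applying subsumption, then every syntactic
symmetry of `F` setwise stabilizes `Lit(F*)`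
(so `Aut_syn(F)_{{Lit(F*)}} = Aut_syn(F)`) and its restriction to `Lit(F*)`
is a syntactic symmetry of `F*` (so `Aut_syn(F)↓_{Lit(F*)} ⊆ Aut_syn(F*)`). -/
theorem exhaustive_subsumption_symmetry_preserving (F Fs : CNF V)
    (hsteps : Relation.ReflTransGen SubStep F Fs)
    (hdone : ¬ ∃ C D : Clause V, C ∈ Fs ∧ D ∈ Fs ∧ C ⊂ D) :
    (∀ φ : Lit V → Lit V, IsSynSym F φ →
        φ '' (CNF.lits Fs : Set (Lit V)) = (CNF.lits Fs : Set (Lit V))) ∧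
    (∀ φ : Lit V → Lit V, IsSynSym F φ →
        φ '' (CNF.lits Fs : Set (Lit V)) = (CNF.lits Fs : Set (Lit V)) →
        IsSynSym Fs φ) := by
  have hmin := coe_eq_setOfPred_minimal_of_exhaustive_subsumption hsteps hdone
  have hsym : ∀ φ, IsSynSym F φ → IsSynSym Fs φ := fun _ hφ => hφ.of_coe_eq_setOfPred_minimal hmin
  exact ⟨fun φ hφ => (hsym φ hφ).1.image_eq, fun φ hφ _ => hsym φ hφ⟩
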